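/- Let f(t) = 1/cosh²(t). For every k ∈ ℕ and every t ∈ ℝ, the (2k)-th iterated derivative satisfies |f^{(2k)}(t)| ≤ |f^{(2k)}(0)|; that is, every even-order derivative of sech² attains its global extreme value at t = 0. -/

import Mathlib

/-!
The Mittag-Leffler expansion `1 / sin² z = ∑ₙ (z + n π)⁻²`, restricted to the vertical line
`z = a + t I`, can be differentiated termwise in `t`: up to a constant factor the `j`-th derivative
is `∑ₙ (a + n π + t I)^{-(j + 2)}`. Since `|a + n π + t I| ≥ |a + n π|`, its modulus is at most
`∑ₙ |a + n π|^{-(j + 2)}`, and for even `j` this bound is the modulus at `t = 0`, where every term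
is positive. The line `a = π / 2` gives `sin (π / 2 + t I) = cosh t`.
-/

open Complex
open scoped Real

section VerticalPoleSum

variable {ι : Type*} {p : ι → ℝ} {m : ℕ} {x : ℝ}

/-- The restriction to the imaginary axis `z = t * I` of the sum `∑ i, (p i + z)⁻ᵐ`, which has poles
of order `m` at the real points `-p i`. Where the family is not summable the value is the junk
value `0` of `tsum`. -/
noncomputable def verticalPoleSum (p : ι → ℝ) (m : ℕ) (t : ℝ) : ℂ :=
  ∑' i, (((p i : ℂ) + t * I) ^ m)⁻¹

lemma ofReal_add_mul_I_ne_zero (hx : x ≠ 0) (t : ℝ) : (x : ℂ) + t * I ≠ 0 :=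
  fun h ↦ hx (by simpa using congrArg re h)

lemma norm_inv_ofReal_add_mul_I_pow_le (hx : x ≠ 0) (m : ℕ) (t : ℝ) :
    ‖(((x : ℂ) + t * I) ^ m)⁻¹‖ ≤ (|x| ^ m)⁻¹ := by
  have hre : |x| ≤ ‖(x : ℂ) + t * I‖ := by simpa using abs_re_le_norm ((x : ℂ) + t * I)
  rw [norm_inv, norm_pow]
  gcongr

lemma hasDerivAt_inv_ofReal_add_mul_I_pow (hx : x ≠ 0) (m : ℕ) (t : ℝ) :
    HasDerivAt (fun t : ℝ ↦ (((x : ℂ) + t * I) ^ m)⁻¹)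
      (-I * m * (((x : ℂ) + t * I) ^ (m + 1))⁻¹) t := by
  have hne := ofReal_add_mul_I_ne_zero hx t
  have hline : HasDerivAt (fun t : ℝ ↦ (x : ℂ) + t * I) I t := by
    simpa using (ofRealCLM.hasDerivAt.mul_const I).const_add (x : ℂ)
  convert! (hasDerivAt_zpow (-m) _ (.inl hne)).comp t hline using 1
  · ext; simp
  · rw [show (-(m : ℤ) - 1) = -((m + 1 : ℕ) : ℤ) by push_cast; ring, zpow_neg, zpow_natCast]
    push_cast
    ring

lemma summable_inv_abs_pow_succ (hm : m ≠ 0) (h : Summable fun i ↦ (|p i| ^ m)⁻¹) :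
    Summable fun i ↦ (|p i| ^ (m + 1))⁻¹ := by
  refine h.of_norm_bounded_eventually ?_
  filter_upwards [h.tendsto_cofinite_zero.eventually_le_const one_pos] with i hi
  have hinv : |p i|⁻¹ ≤ 1 := by
    rw [← inv_pow] at hi
    exact (pow_le_one_iff_of_nonneg (by positivity) hm).1 hi
  rw [Real.norm_of_nonneg (by positivity), pow_succ, mul_inv]
  exact mul_le_of_le_one_right (by positivity) hinv

lemma summable_inv_abs_pow_add (hm : m ≠ 0) (h : Summable fun i ↦ (|p i| ^ m)⁻¹) (j : ℕ) :
    Summable fun i ↦ (|p i| ^ (m + j))⁻¹ := by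
  induction j with
  | zero => exact h
  | succ j ih => exact summable_inv_abs_pow_succ (by lia) ih

lemma hasDerivAt_verticalPoleSum (hp : ∀ i, p i ≠ 0) (hm : m ≠ 0)
    (h : Summable fun i ↦ (|p i| ^ m)⁻¹) (t : ℝ) :
    HasDerivAt (verticalPoleSum p m) (-I * m * verticalPoleSum p (m + 1) t) t := by
  have hsum : Summable fun i ↦ (((p i : ℂ) + (0 : ℝ) * I) ^ m)⁻¹ :=
    h.of_norm_bounded fun i ↦ norm_inv_ofReal_add_mul_I_pow_le (hp i) m 0
  have hbound (i : ι) (s : ℝ) : ‖-I * m * (((p i : ℂ) + s * I) ^ (m + 1))⁻¹‖ ≤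
      m * (|p i| ^ (m + 1))⁻¹ := by
    simpa using mul_le_mul_of_nonneg_left
      (norm_inv_ofReal_add_mul_I_pow_le (hp i) (m + 1) s) m.cast_nonneg
  rw [verticalPoleSum, ← tsum_mul_left]
  exact hasDerivAt_tsum ((summable_inv_abs_pow_succ hm h).mul_left (m : ℝ))
    (fun i ↦ hasDerivAt_inv_ofReal_add_mul_I_pow (hp i) m) hbound hsum t

lemma iteratedDeriv_verticalPoleSum (hp : ∀ i, p i ≠ 0) (hm : m ≠ 0)
    (h : Summable fun i ↦ (|p i| ^ m)⁻¹) (j : ℕ) :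
    iteratedDeriv j (verticalPoleSum p m) =
      fun t ↦ (-I) ^ j * m.ascFactorial j * verticalPoleSum p (m + j) t := by
  induction j with
  | zero => simp
  | succ j ih =>
    ext t
    have hderiv := hasDerivAt_verticalPoleSum hp (by lia) (summable_inv_abs_pow_add hm h j) t
    rw [iteratedDeriv_succ, ih, (hderiv.const_mul _).deriv, Nat.ascFactorial_succ, add_assoc]
    push_cast
    ring

lemma norm_verticalPoleSum_zero (hm : Even m) :
    ‖verticalPoleSum p m 0‖ = ∑' i, (|p i| ^ m)⁻¹ := by
  have hreal : verticalPoleSum p m 0 = ((∑' i, (|p i| ^ m)⁻¹ : ℝ) : ℂ) := by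
    simp [verticalPoleSum, hm.pow_abs, ofReal_tsum]
  rw [hreal, Complex.norm_of_nonneg (tsum_nonneg fun i ↦ by positivity)]

lemma norm_verticalPoleSum_le_norm_zero (hp : ∀ i, p i ≠ 0) (hm : Even m)
    (h : Summable fun i ↦ (|p i| ^ m)⁻¹) (t : ℝ) :
    ‖verticalPoleSum p m t‖ ≤ ‖verticalPoleSum p m 0‖ := by
  rw [norm_verticalPoleSum_zero hm]
  exact tsum_of_norm_bounded h.hasSum fun i ↦ norm_inv_ofReal_add_mul_I_pow_le (hp i) m t

lemma norm_iteratedDeriv_verticalPoleSum_le_norm_zero (hp : ∀ i, p i ≠ 0) (hm : m ≠ 0)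
    (h : Summable fun i ↦ (|p i| ^ m)⁻¹) {j : ℕ} (hmj : Even (m + j)) (t : ℝ) :
    ‖iteratedDeriv j (verticalPoleSum p m) t‖ ≤ ‖iteratedDeriv j (verticalPoleSum p m) 0‖ := by
  simp only [iteratedDeriv_verticalPoleSum hp hm h, norm_mul]
  gcongr
  exact norm_verticalPoleSum_le_norm_zero hp hmj (summable_inv_abs_pow_add hm h j) t

end VerticalPoleSum

section InvSinSq

variable {z : ℂ} {a : ℝ}

lemma hasDerivAt_cot_of_sin_ne_zero (hz : sin z ≠ 0) :
    HasDerivAt cot (-(sin z ^ 2)⁻¹) z := by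
  convert! (hasDerivAt_cos z).div (hasDerivAt_sin z) hz using 1
  field_simp
  linear_combination sin_sq_add_cos_sq z

lemma pi_sq_mul_inv_sin_pi_mul_sq_eq_tsum_of_im_pos (hz : 0 < z.im) :
    π ^ 2 * (sin (π * z) ^ 2)⁻¹ = ∑' n : ℤ, ((z + n) ^ 2)⁻¹ := by
  have hsin : sin (π * z) ≠ 0 :=
    sin_pi_mul_ne_zero (UpperHalfPlane.coe_mem_integerComplement ⟨z, hz⟩)
  have hcot : HasDerivAt (fun w : ℂ ↦ π * cot (π * w)) (-(π ^ 2 * (sin (π * z) ^ 2)⁻¹)) z := by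
    convert! ((hasDerivAt_cot_of_sin_ne_zero hsin).comp z
      ((hasDerivAt_id z).const_mul (π : ℂ))).const_mul (π : ℂ) using 1
    ring
  have hseries := iteratedDerivWithin_cot_pi_mul_eq_mul_tsum_div_pow le_rfl hz
  rw [iteratedDerivWithin_one, derivWithin_of_isOpen UpperHalfPlane.isOpen_upperHalfPlaneSet hz,
    hcot.deriv] at hseries
  simpa using hseries

lemma inv_sin_sq_eq_tsum_of_im_pos (hz : 0 < z.im) :
    (sin z ^ 2)⁻¹ = ∑' n : ℤ, ((z + n * π) ^ 2)⁻¹ := by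
  have hpi : (π : ℂ) ≠ 0 := ofReal_ne_zero.2 Real.pi_ne_zero
  have him : 0 < (z / π).im := by
    rw [div_ofReal_im]
    positivity
  have hscale (n : ℤ) : ((z + n * π) ^ 2)⁻¹ = (π ^ 2 : ℂ)⁻¹ * ((z / π + n) ^ 2)⁻¹ := by
    rw [← mul_inv, ← mul_pow]
    field_simp
  simp only [hscale]
  rw [tsum_mul_left, ← pi_sq_mul_inv_sin_pi_mul_sq_eq_tsum_of_im_pos him]
  field_simp

lemma inv_sin_sq_eq_tsum_of_im_ne_zero (hz : z.im ≠ 0) :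
    (sin z ^ 2)⁻¹ = ∑' n : ℤ, ((z + n * π) ^ 2)⁻¹ := by
  rcases hz.lt_or_gt with hneg | hpos
  · have hreflect := inv_sin_sq_eq_tsum_of_im_pos (z := -z) (by simpa using hneg)
    rw [sin_neg, neg_sq, ← (Equiv.neg ℤ).tsum_eq] at hreflect
    rw [hreflect]
    refine tsum_congr fun n ↦ ?_
    simp only [Equiv.neg_apply]
    push_cast
    ring
  · exact inv_sin_sq_eq_tsum_of_im_pos hpos

lemma add_int_mul_pi_ne_zero (ha : Real.sin a ≠ 0) (n : ℤ) : a + n * π ≠ 0 := by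
  intro h
  refine Real.sin_ne_zero_iff.1 ha (-n) ?_
  push_cast
  linarith

lemma summable_inv_abs_add_int_mul_pi_sq (a : ℝ) :
    Summable fun n : ℤ ↦ (|a + n * π| ^ 2)⁻¹ := by
  have hint := (EisensteinSeries.linear_right_summable ((a / π : ℝ) : ℂ) 1 le_rfl).norm
  refine (hint.mul_left (π ^ 2)⁻¹).congr fun n ↦ ?_
  have hcast : ((1 : ℤ) : ℂ) * ((a / π : ℝ) : ℂ) + n = ((a / π + n : ℝ) : ℂ) := by push_cast; ring
  rw [hcast, norm_inv, norm_zpow, norm_real, Real.norm_eq_abs, zpow_ofNat, sq_abs, sq_abs,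
    ← mul_inv, ← mul_pow]
  field_simp

lemma sin_ofReal_add_mul_I_ne_zero (ha : Real.sin a ≠ 0) (t : ℝ) :
    sin (a + t * I) ≠ 0 := by
  refine sin_ne_zero_iff.2 fun n h ↦ Real.sin_ne_zero_iff.1 ha n ?_
  simpa using (congrArg re h).symm

lemma inv_sin_sq_eq_verticalPoleSum (ha : Real.sin a ≠ 0) :
    (fun t : ℝ ↦ (sin (a + t * I) ^ 2)⁻¹) = verticalPoleSum (fun n : ℤ ↦ a + n * π) 2 := by
  have hcont : Continuous fun t : ℝ ↦ (sin (a + t * I) ^ 2)⁻¹ :=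
    Continuous.inv₀ (by fun_prop) fun t ↦ pow_ne_zero 2 (sin_ofReal_add_mul_I_ne_zero ha t)
  have hcontSum : Continuous (verticalPoleSum (fun n : ℤ ↦ a + n * π) 2) :=
    continuous_iff_continuousAt.2 fun t ↦ (hasDerivAt_verticalPoleSum (add_int_mul_pi_ne_zero ha)
      two_ne_zero (summable_inv_abs_add_int_mul_pi_sq a) t).continuousAt
  -- The expansion is known only off the real axis; continuity adds the point `t = 0`.
  refine hcont.ext_on (dense_compl_singleton 0) hcontSum fun t ht ↦ ?_
  dsimp only
  rw [inv_sin_sq_eq_tsum_of_im_ne_zero (by simpa using ht)]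
  refine tsum_congr fun n ↦ ?_
  push_cast
  ring

lemma norm_iteratedDeriv_inv_sin_sq_le_norm_zero (ha : Real.sin a ≠ 0) {j : ℕ}
    (hj : Even j) (t : ℝ) :
    ‖iteratedDeriv j (fun t : ℝ ↦ (sin (a + t * I) ^ 2)⁻¹) t‖ ≤
      ‖iteratedDeriv j (fun t : ℝ ↦ (sin (a + t * I) ^ 2)⁻¹) 0‖ := by
  rw [inv_sin_sq_eq_verticalPoleSum ha]
  exact norm_iteratedDeriv_verticalPoleSum_le_norm_zero (add_int_mul_pi_ne_zero ha) two_ne_zero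
    (summable_inv_abs_add_int_mul_pi_sq a) (even_two.add hj) t

end InvSinSq

lemma norm_iteratedDeriv_ofReal_comp {f : ℝ → ℝ} {n : ℕ} {t : ℝ} (hf : ContDiffAt ℝ n f t) :
    ‖iteratedDeriv n (fun t ↦ (f t : ℂ)) t‖ = |iteratedDeriv n f t| := by
  rw [← norm_iteratedFDeriv_eq_norm_iteratedDeriv, ← Real.norm_eq_abs,
    ← norm_iteratedFDeriv_eq_norm_iteratedDeriv]
  exact ofRealLI.norm_iteratedFDeriv_comp_left hf le_rfl

lemma ofReal_one_div_cosh_sq (t : ℝ) :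
    ((1 / Real.cosh t ^ 2 : ℝ) : ℂ) = (sin ((π / 2 : ℝ) + t * I) ^ 2)⁻¹ := by
  push_cast
  rw [add_comm, sin_add_pi_div_two, cos_mul_I, one_div]

lemma contDiff_one_div_cosh_sq {n : WithTop ℕ∞} : ContDiff ℝ n fun t : ℝ ↦ 1 / Real.cosh t ^ 2 :=
  contDiff_const.div (Real.contDiff_cosh.pow 2) fun t ↦ pow_ne_zero 2 (Real.cosh_pos t).ne'

theorem stmt_14 :
    ∀ (k : ℕ) (t : ℝ),
      |iteratedDeriv (2 * k) (fun t : ℝ => 1 / Real.cosh t ^ 2) t| ≤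
        |iteratedDeriv (2 * k) (fun t : ℝ => 1 / Real.cosh t ^ 2) 0| := by
  intro k t
  rw [← norm_iteratedDeriv_ofReal_comp contDiff_one_div_cosh_sq.contDiffAt,
    ← norm_iteratedDeriv_ofReal_comp contDiff_one_div_cosh_sq.contDiffAt]
  simp only [ofReal_one_div_cosh_sq]
  exact norm_iteratedDeriv_inv_sin_sq_le_norm_zero (by simp) (even_two_mul k) t
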